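/- Let q be a prime power. There is a constant C, depending only on q, such that for every integer M ≥ 1, the product over all monic irreducible Q ∈ F_q[X] of degree at most M of (1 + 2·q^{−(1 − 1/M)·deg Q}) is at most C·M^2. -/

import Mathlib

open Polynomial

/-!
Distinct monic irreducible polynomials of degree `d` are pairwise coprime divisors of
`X ^ q ^ d - X`, so there are at most `q ^ d / d` of them. With `ε = 1 / M`, those of degree
`d ≤ M` therefore contribute at most `q ^ (ε * d) / d` to `∑ q ^ (-(1 - ε) * deg Q)`, and since
`ε * d ≤ 1`, Bernoulli's inequality bounds this by `1 / d + ε * (q - 1)`. Summing over `d ≤ M`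
gives at most `q + log M`; the product is then controlled by `1 + t ≤ exp t`.
-/

theorem rpow_mul_div_le_inv_add {x d ε : ℝ} (hx : 0 ≤ x) (hd : 0 < d) (hε : 0 ≤ ε)
    (hεd : ε * d ≤ 1) : x ^ (ε * d) / d ≤ d⁻¹ + ε * (x - 1) := by
  have bernoulli : x ^ (ε * d) ≤ 1 + ε * d * (x - 1) := by
    simpa using rpow_one_add_le_one_add_mul_self (s := x - 1) (by linarith) (by positivity) hεd
  calc x ^ (ε * d) / d ≤ (1 + ε * d * (x - 1)) / d := by gcongr
    _ = d⁻¹ + ε * (x - 1) := by field_simp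

theorem sum_Icc_inv_le_one_add_log (n : ℕ) :
    ∑ d ∈ Finset.Icc 1 n, (d : ℝ)⁻¹ ≤ 1 + Real.log n := by
  simpa [harmonic_eq_sum_Icc] using harmonic_le_one_add_log n

theorem finite_setOf_natDegree_le (R : Type*) [Semiring R] [Finite R] (n : ℕ) :
    {P : R[X] | P.natDegree ≤ n}.Finite := by
  have : Finite (degreeLT R (n + 1)) := .of_equiv _ (degreeLTEquiv R (n + 1)).symm.toEquiv
  refine (Set.toFinite (degreeLT R (n + 1) : Set R[X])).subset fun P hP ↦ ?_
  exact mem_degreeLT.2 (degree_le_natDegree.trans_lt (by exact_mod_cast Nat.lt_succ_of_le hP))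

theorem isCoprime_of_monic_irreducible_of_ne {F : Type*} [Field F] {P Q : F[X]}
    (hP : P.Monic) (hP' : Irreducible P) (hQ : Q.Monic) (hQ' : Irreducible Q) (hPQ : P ≠ Q) :
    IsCoprime P Q :=
  hP'.coprime_iff_not_dvd.2 fun h ↦
    hPQ (eq_of_monic_of_associated hP hQ (hP'.associated_of_dvd hQ' h))

section FiniteField

variable {F : Type*} [Field F] [Finite F] {S : Finset F[X]}

theorem sum_natDegree_le_card_pow {n : ℕ} (hn : n ≠ 0)
    (hS : ∀ Q ∈ S, Q.Monic ∧ Irreducible Q) (hdvd : ∀ Q ∈ S, Q.natDegree ∣ n) :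
    ∑ Q ∈ S, Q.natDegree ≤ Nat.card F ^ n := by
  have prod_dvd : ∏ Q ∈ S, Q ∣ X ^ Nat.card F ^ n - X := by
    refine Finset.prod_dvd_of_coprime (fun P hP Q hQ hPQ ↦ ?_) fun Q hQ ↦ ?_
    · exact isCoprime_of_monic_irreducible_of_ne (hS P hP).1 (hS P hP).2 (hS Q hQ).1 (hS Q hQ).2 hPQ
    · exact (hS Q hQ).2.natDegree_dvd_iff_dvd_X_pow_card_pow_sub_X.1 (hdvd Q hQ)
  have hcard : 1 < Nat.card F := Finite.one_lt_card
  calc ∑ Q ∈ S, Q.natDegree = (∏ Q ∈ S, Q).natDegree :=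
        (natDegree_prod_of_monic S _ fun Q hQ ↦ (hS Q hQ).1).symm
    _ ≤ (X ^ Nat.card F ^ n - X : F[X]).natDegree :=
        natDegree_le_of_dvd prod_dvd (FiniteField.X_pow_card_pow_sub_X_ne_zero F hn hcard)
    _ = Nat.card F ^ n := FiniteField.X_pow_card_pow_sub_X_natDegree_eq F hn hcard

theorem card_mul_le_card_pow_of_natDegree_eq {d : ℕ} (hS : ∀ Q ∈ S, Q.Monic ∧ Irreducible Q)
    (hdeg : ∀ Q ∈ S, Q.natDegree = d) : S.card * d ≤ Nat.card F ^ d := by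
  rcases eq_or_ne d 0 with rfl | hd
  · simp
  · calc S.card * d = ∑ Q ∈ S, Q.natDegree := by
          rw [Finset.sum_congr rfl hdeg, Finset.sum_const, smul_eq_mul]
      _ ≤ Nat.card F ^ d := sum_natDegree_le_card_pow hd hS fun Q hQ ↦ (hdeg Q hQ).dvd

theorem sum_rpow_le_rpow_div_of_natDegree_eq {d : ℕ} (hd : 0 < d) (ε : ℝ)
    (hS : ∀ Q ∈ S, Q.Monic ∧ Irreducible Q) (hdeg : ∀ Q ∈ S, Q.natDegree = d) :
    ∑ Q ∈ S, (Nat.card F : ℝ) ^ (-(1 - ε) * (Q.natDegree : ℝ)) ≤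
      (Nat.card F : ℝ) ^ (ε * d) / d := by
  have hq : 0 < (Nat.card F : ℝ) := by exact_mod_cast Nat.card_pos
  have hcard : (S.card : ℝ) ≤ (Nat.card F : ℝ) ^ (d : ℝ) / d := by
    rw [le_div_iff₀ (by exact_mod_cast hd), Real.rpow_natCast]
    exact_mod_cast card_mul_le_card_pow_of_natDegree_eq hS hdeg
  set q : ℝ := (Nat.card F : ℝ)
  calc ∑ Q ∈ S, q ^ (-(1 - ε) * (Q.natDegree : ℝ))
      = S.card * q ^ (-(1 - ε) * (d : ℝ)) := by
        rw [Finset.sum_congr rfl fun Q hQ ↦ by rw [hdeg Q hQ], Finset.sum_const, nsmul_eq_mul]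
    _ ≤ q ^ (d : ℝ) / d * q ^ (-(1 - ε) * (d : ℝ)) := by gcongr
    _ = q ^ (ε * d) / d := by
        rw [div_mul_eq_mul_div, ← Real.rpow_add hq]
        ring_nf

theorem sum_rpow_le_add_log_of_natDegree_le {M : ℕ} {ε : ℝ} (hε : 0 ≤ ε) (hεM : ε * M ≤ 1)
    (hS : ∀ Q ∈ S, Q.Monic ∧ Irreducible Q) (hdeg : ∀ Q ∈ S, Q.natDegree ≤ M) :
    ∑ Q ∈ S, (Nat.card F : ℝ) ^ (-(1 - ε) * (Q.natDegree : ℝ)) ≤ Nat.card F + Real.log M := by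
  have hq : 1 ≤ (Nat.card F : ℝ) := by exact_mod_cast Nat.card_pos
  set q : ℝ := (Nat.card F : ℝ)
  have hmaps : ∀ Q ∈ S, Q.natDegree ∈ Finset.Icc 1 M := fun Q hQ ↦
    Finset.mem_Icc.2 ⟨(hS Q hQ).2.natDegree_pos, hdeg Q hQ⟩
  have sum_degree_le : ∀ d ∈ Finset.Icc 1 M,
      ∑ Q ∈ S with Q.natDegree = d, q ^ (-(1 - ε) * (Q.natDegree : ℝ)) ≤
        (d : ℝ)⁻¹ + ε * (q - 1) := fun d hd ↦ by
    obtain ⟨hd, hdM⟩ := Finset.mem_Icc.1 hd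
    have hεd : ε * d ≤ 1 := le_trans (by gcongr) hεM
    calc ∑ Q ∈ S with Q.natDegree = d, q ^ (-(1 - ε) * (Q.natDegree : ℝ))
        ≤ q ^ (ε * d) / d :=
          sum_rpow_le_rpow_div_of_natDegree_eq hd ε (fun Q hQ ↦ hS Q (Finset.mem_filter.1 hQ).1)
            fun Q hQ ↦ (Finset.mem_filter.1 hQ).2
      _ ≤ (d : ℝ)⁻¹ + ε * (q - 1) :=
          rpow_mul_div_le_inv_add (Nat.cast_nonneg _) (by exact_mod_cast hd) hε hεd
  calc ∑ Q ∈ S, q ^ (-(1 - ε) * (Q.natDegree : ℝ))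
      = ∑ d ∈ Finset.Icc 1 M,
          ∑ Q ∈ S with Q.natDegree = d, q ^ (-(1 - ε) * (Q.natDegree : ℝ)) :=
        (Finset.sum_fiberwise_of_maps_to hmaps _).symm
    _ ≤ ∑ d ∈ Finset.Icc 1 M, ((d : ℝ)⁻¹ + ε * (q - 1)) := Finset.sum_le_sum sum_degree_le
    _ = ∑ d ∈ Finset.Icc 1 M, (d : ℝ)⁻¹ + ε * M * (q - 1) := by
        rw [Finset.sum_add_distrib, Finset.sum_const, Nat.card_Icc, Nat.add_sub_cancel,
          nsmul_eq_mul, ← mul_assoc, mul_comm (M : ℝ)]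
    _ ≤ (1 + Real.log M) + (q - 1) :=
        add_le_add (sum_Icc_inv_le_one_add_log M)
          (mul_le_of_le_one_left (sub_nonneg.2 hq) hεM)
    _ = q + Real.log M := by ring

theorem prod_one_add_mul_rpow_le_of_natDegree_le {c : ℝ} (hc : 0 ≤ c) {M : ℕ} (hM : 0 < M) {ε : ℝ}
    (hε : 0 ≤ ε) (hεM : ε * M ≤ 1) (hS : ∀ Q ∈ S, Q.Monic ∧ Irreducible Q)
    (hdeg : ∀ Q ∈ S, Q.natDegree ≤ M) :
    ∏ Q ∈ S, (1 + c * (Nat.card F : ℝ) ^ (-(1 - ε) * (Q.natDegree : ℝ))) ≤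
      Real.exp (c * Nat.card F) * (M : ℝ) ^ c := by
  set q : ℝ := (Nat.card F : ℝ)
  calc ∏ Q ∈ S, (1 + c * q ^ (-(1 - ε) * (Q.natDegree : ℝ)))
      ≤ Real.exp (∑ Q ∈ S, c * q ^ (-(1 - ε) * (Q.natDegree : ℝ))) :=
        Real.prod_one_add_le_exp_sum S fun Q ↦ by positivity
    _ ≤ Real.exp (c * (q + Real.log M)) := by
        rw [← Finset.mul_sum]
        gcongr
        exact sum_rpow_le_add_log_of_natDegree_le hε hεM hS hdeg
    _ = Real.exp (c * q) * (M : ℝ) ^ c := by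
        rw [Real.rpow_def_of_pos (by exact_mod_cast hM), ← Real.exp_add]
        ring_nf

end FiniteField

/-- there is a constant `C` depending only on `q` such that for every
`M ≥ 1`, `∏_{Q monic irreducible, deg Q ≤ M} (1 + 2·q^{-(1 - 1/M)·deg Q}) ≤ C·M²`. -/
theorem stmt10 (q : ℕ) (hq_pp : IsPrimePow q)
    (Fq : Type) [Field Fq] [Fintype Fq] (hFq : Fintype.card Fq = q) :
    ∃ C : ℝ, ∀ M : ℕ, 1 ≤ M →
      (∏ᶠ Q ∈ {Q : Fq[X] | Q.Monic ∧ Irreducible Q ∧ Q.natDegree ≤ M},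
          (1 + 2 * (q : ℝ) ^ (-(1 - 1 / (M : ℝ)) * (Q.natDegree : ℝ)))) ≤ C * (M : ℝ) ^ 2 := by
  refine ⟨Real.exp (2 * q), fun M hM ↦ ?_⟩
  have hfin : {Q : Fq[X] | Q.Monic ∧ Irreducible Q ∧ Q.natDegree ≤ M}.Finite :=
    (finite_setOf_natDegree_le Fq M).subset fun Q hQ ↦ hQ.2.2
  have hmem : ∀ Q ∈ hfin.toFinset, Q.Monic ∧ Irreducible Q ∧ Q.natDegree ≤ M :=
    fun Q hQ ↦ hfin.mem_toFinset.1 hQ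
  rw [finprod_mem_eq_finite_toFinset_prod _ hfin, ← hFq, ← Nat.card_eq_fintype_card,
    ← Real.rpow_two]
  exact prod_one_add_mul_rpow_le_of_natDegree_le zero_le_two hM (by positivity)
    (one_div_mul_cancel (by positivity)).le (fun Q hQ ↦ ⟨(hmem Q hQ).1, (hmem Q hQ).2.1⟩)
    fun Q hQ ↦ (hmem Q hQ).2.2
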